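/- arXiv:2207.12501 — 4 statements merged into one kernel-verified Lean document; each statement's English description precedes it below -/
import Mathlib

section
/- Let x, y, z ∈ ℝ² with y ≠ z, x ≠ y, and ‖x − y‖ = ‖x − z‖. Let w = (y + z)/2 be the midpoint of y and z, and assume w ≠ x. Let e₁ = (y − x)/‖x − y‖ and e₃ = (w − x)/‖x − w‖. Then ‖e₁ − e₃‖ < ‖y − z‖ / ‖x − y‖. -/
/-!
Put `a = w - x` and `b = (y - z)/2`, so that `y - x = a + b` and `z - x = a - b`. Equidistance makes
`a` and `b` orthogonal, so `c = ‖a‖ / ‖a + b‖`, the cosine of the angle between `e₁` and `e₃`, lies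
in `(0, 1)`. Then `‖e₁ - e₃‖² = 2 (1 - c)`, whereas `(‖y - z‖ / ‖x - y‖)² = 4 (1 - c²)`
`= 4 (1 - c) (1 + c)`, which is strictly larger.
-/

/-- The inequality in the coordinates `a = w - x`, `b = (y - z)/2`; it holds in every real inner
product space. -/
theorem norm_direction_sub_lt_of_inner_eq_zero {E : Type*} [NormedAddCommGroup E]
    [InnerProductSpace ℝ E] (a b : E) (ha : a ≠ 0) (hb : b ≠ 0) (hab : inner ℝ a b = 0) :
    ‖‖a + b‖⁻¹ • (a + b) - ‖a‖⁻¹ • a‖ < 2 * ‖b‖ / ‖a + b‖ := by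
  have hs : 0 < ‖a‖ := norm_pos_iff.mpr ha
  have ht : 0 < ‖b‖ := norm_pos_iff.mpr hb
  have hpyth : ‖a + b‖ ^ 2 = ‖a‖ ^ 2 + ‖b‖ ^ 2 := by
    rw [norm_add_sq_real, hab]; ring
  have hr : 0 < ‖a + b‖ := by
    by_contra h
    have h0 : ‖a + b‖ = 0 := le_antisymm (not_lt.mp h) (norm_nonneg _)
    rw [h0] at hpyth
    nlinarith
  have hinner : inner ℝ (a + b) a = ‖a‖ ^ 2 := by
    rw [inner_add_left, real_inner_self_eq_norm_sq, real_inner_comm, hab, add_zero]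
  have hsq : ‖‖a + b‖⁻¹ • (a + b) - ‖a‖⁻¹ • a‖ ^ 2 = 2 - 2 * (‖a‖ / ‖a + b‖) := by
    rw [norm_sub_sq_real, norm_smul, norm_smul, real_inner_smul_left, real_inner_smul_right,
      hinner, norm_inv, norm_inv, norm_norm, norm_norm, inv_mul_cancel₀ hr.ne',
      inv_mul_cancel₀ hs.ne']
    field_simp
    ring
  have hc0 : 0 < ‖a‖ / ‖a + b‖ := div_pos hs hr
  have hc1 : ‖a‖ / ‖a + b‖ < 1 := by
    rw [div_lt_one hr]
    nlinarith
  have hrhs : (2 * ‖b‖ / ‖a + b‖) ^ 2 = 4 * (1 - (‖a‖ / ‖a + b‖) ^ 2) := by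
    field_simp
    rw [hpyth]
    ring
  refine lt_of_pow_lt_pow_left₀ 2 (by positivity) ?_
  rw [hsq, hrhs]
  nlinarith [mul_pos hc0 (sub_pos.mpr hc1)]

/-- If `‖x - y‖ = ‖x - z‖`, `w` is the midpoint of `y` and `z`,
`e₁ = (y - x)/‖x - y‖` and `e₃ = (w - x)/‖x - w‖`, then
`‖e₁ - e₃‖ < ‖y - z‖ / ‖x - y‖`. -/
theorem direction_diff_lt
    (x y z : EuclideanSpace ℝ (Fin 2))
    (hyz : y ≠ z) (hxy : x ≠ y)
    (hdist : ‖x - y‖ = ‖x - z‖)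
    (hw : (2 : ℝ)⁻¹ • (y + z) ≠ x) :
    ‖(‖x - y‖⁻¹ • (y - x)) -
        (‖x - (2 : ℝ)⁻¹ • (y + z)‖⁻¹ • ((2 : ℝ)⁻¹ • (y + z) - x))‖
      < ‖y - z‖ / ‖x - y‖ := by
  have hsum : y - x = ((2 : ℝ)⁻¹ • (y + z) - x) + (2 : ℝ)⁻¹ • (y - z) := by module
  have hdiff : z - x = ((2 : ℝ)⁻¹ • (y + z) - x) - (2 : ℝ)⁻¹ • (y - z) := by module
  have hnorm : ‖y - z‖ = 2 * ‖(2 : ℝ)⁻¹ • (y - z)‖ := by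
    rw [norm_smul]; norm_num; ring
  rw [norm_sub_rev x y, norm_sub_rev x z, hsum, hdiff] at hdist
  rw [norm_sub_rev x y, norm_sub_rev x, hsum, hnorm]
  refine norm_direction_sub_lt_of_inner_eq_zero _ _ (sub_ne_zero.mpr hw)
    (smul_ne_zero (by norm_num) (sub_ne_zero.mpr hyz)) ?_
  -- Equal diagonals `‖a + b‖ = ‖a - b‖` force `a ⟂ b`.
  have hsq := congrArg (· ^ 2) hdist
  simp only [norm_add_sq_real, norm_sub_sq_real] at hsq
  linarith
end

section
/- Let f : [0,∞) → [0,∞) be a nondecreasing function that is affine on each interval [n, n+1] for every integer n ≥ 0. Let r, C ∈ ℕ with C ≥ 1, and let t be a real number with r/C ≤ t < r. Then for any reals 0 ≤ a < b ≤ r there is a finite partition a = a₀ ≤ a₁ ≤ ⋯ ≤ a_{k+1} = b of [a, b] into closed intervals [a_i, a_{i+1}] with disjoint interiors such that: the number of intervals is at most 3C + 1; each interval [a_i, a_{i+1}] is yellow or teal for f; and a_{i+1} ≤ a_i + t for every i. -/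
/-!
Put `g x = f x - x`. An interval `[a, b]` is teal exactly when `g` attains its minimum over `[a, b]`
at `b`, and yellow exactly when it attains it at `a`. Hence if `m` minimises the continuous function
`g` on an interval `[p, q]`, then `[p, m]` is teal and `[m, q]` is yellow. Cutting `[a, b]` into `C`
equal pieces, of length at most `r / C ≤ t`, and each piece at a minimiser of `g`, gives an
admissible partition into `2 * C ≤ 3 * C + 1` intervals.
-/

/-- `[a, b]` is teal for `f`: `f(b) - f(c) ≤ b - c` for every `c ∈ [a, b]`. -/
def IsTeal (f : ℝ → ℝ) (a b : ℝ) : Prop :=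
  ∀ c ∈ Set.Icc a b, f b - f c ≤ b - c

/-- `[a, b]` is yellow for `f`: `f(c) - f(a) ≥ c - a` for every `c ∈ [a, b]`. -/
def IsYellow (f : ℝ → ℝ) (a b : ℝ) : Prop :=
  ∀ c ∈ Set.Icc a b, c - a ≤ f c - f a

lemma continuousOn_of_affine_pieces (f : ℝ → ℝ)
    (haff : ∀ n : ℕ, ∀ x ∈ Set.Icc (n : ℝ) (n + 1),
      f x = f n + (x - n) * (f (n + 1) - f n)) (n : ℕ) :
    ContinuousOn f (Set.Icc (0 : ℝ) n) := by
  induction n with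
  | zero => simp
  | succ n ih =>
    have h1 : ContinuousOn f (Set.Icc (n : ℝ) (n + 1)) := by
      refine ContinuousOn.congr (f := fun x => f n + (x - n) * (f (n + 1) - f n)) ?_ (haff n)
      fun_prop
    have h2 := ih.union_of_isClosed h1 isClosed_Icc isClosed_Icc
    rw [Set.Icc_union_Icc_eq_Icc (by positivity) (by linarith)] at h2
    push_cast
    exact h2

/-- A minimiser of `x ↦ f x - x` on `[p, q]` cuts it into a teal and a yellow interval. -/
lemma exists_teal_yellow_split (f : ℝ → ℝ) (p q : ℝ) (hpq : p ≤ q)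
    (hf : ContinuousOn f (Set.Icc p q)) :
    ∃ m, p ≤ m ∧ m ≤ q ∧ IsTeal f p m ∧ IsYellow f m q := by
  obtain ⟨m, hm, hmin⟩ := isCompact_Icc.exists_isMinOn (Set.nonempty_Icc.2 hpq)
    (hf.sub continuousOn_id)
  have hmin' : ∀ c ∈ Set.Icc p q, f m - m ≤ f c - c := fun c hc => hmin hc
  refine ⟨m, hm.1, hm.2, fun c hc => ?_, fun c hc => ?_⟩
  · linarith [hmin' c ⟨hc.1, hc.2.trans hm.2⟩]
  · linarith [hmin' c ⟨hm.1.trans hc.1, hc.2⟩]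

/-- Existence of an `(3C, r, t)`-admissible partition of `[a, b] ⊆ [0, r]`:
a partition into at most `3C + 1` closed intervals, each yellow or teal for `f`,
each of length at most `t`. -/
theorem exists_admissible_partition
    (f : ℝ → ℝ)
    (hf0 : ∀ x, 0 ≤ x → 0 ≤ f x)
    (hmono : MonotoneOn f (Set.Ici (0 : ℝ)))
    (haff : ∀ n : ℕ, ∀ x ∈ Set.Icc (n : ℝ) (n + 1),
      f x = f n + (x - n) * (f (n + 1) - f n))
    (r C : ℕ) (hC : 1 ≤ C) (t : ℝ)
    (ht : (r : ℝ) / C ≤ t) (htr : t < r)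
    (a b : ℝ) (ha : 0 ≤ a) (hab : a < b) (hbr : b ≤ r) :
    ∃ (k : ℕ) (A : ℕ → ℝ),
      A 0 = a ∧ A (k + 1) = b ∧
      (∀ i ≤ k, A i ≤ A (i + 1)) ∧
      k + 1 ≤ 3 * C + 1 ∧
      (∀ i ≤ k, IsYellow f (A i) (A (i + 1)) ∨ IsTeal f (A i) (A (i + 1))) ∧
      (∀ i ≤ k, A (i + 1) ≤ A i + t) := by
  have hC0 : (0 : ℝ) < C := by exact_mod_cast hC
  obtain ⟨d, hd⟩ : ∃ d : ℝ, d = (b - a) / C := ⟨_, rfl⟩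
  have hd0 : 0 ≤ d := by rw [hd]; exact div_nonneg (by linarith) hC0.le
  have hdt : d ≤ t := by
    rw [hd]
    exact (div_le_div_of_nonneg_right (by linarith) hC0.le).trans ht
  have hCd : C * d = b - a := by rw [hd]; field_simp
  have hsplit : ∀ j : ℕ, ∃ m, j < C → a + j * d ≤ m ∧ m ≤ a + (j + 1) * d ∧
      IsTeal f (a + j * d) m ∧ IsYellow f m (a + (j + 1) * d) := by
    intro j
    by_cases hj : j < C
    · have hj' : (j : ℝ) + 1 ≤ C := by exact_mod_cast hj
      have hle : ((j : ℝ) + 1) * d ≤ C * d := mul_le_mul_of_nonneg_right hj' hd0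
      have hlo : 0 ≤ (j : ℝ) * d := by positivity
      obtain ⟨m, hm⟩ := exists_teal_yellow_split f (a + j * d) (a + (j + 1) * d) (by linarith)
        ((continuousOn_of_affine_pieces f haff r).mono
          (Set.Icc_subset_Icc (by linarith) (by linarith)))
      exact ⟨m, fun _ => hm⟩
    · exact ⟨0, fun h => absurd h hj⟩
  choose m hm using hsplit
  -- Even indices carry the endpoints of the equal pieces, odd indices the minimisers.
  obtain ⟨A, hA⟩ : ∃ A : ℕ → ℝ, A = fun i => if Even i then a + ((i / 2 : ℕ) : ℝ) * d
    else m (i / 2) := ⟨_, rfl⟩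
  have hAe : ∀ j : ℕ, A (2 * j) = a + j * d := fun j => by simp [hA]
  have hAo : ∀ j : ℕ, A (2 * j + 1) = m j := fun j => by
    have h : (2 * j + 1) / 2 = j := by omega
    simp [hA, h]
  have key : ∀ i ≤ 2 * C - 1, A i ≤ A (i + 1) ∧
      (IsYellow f (A i) (A (i + 1)) ∨ IsTeal f (A i) (A (i + 1))) ∧ A (i + 1) ≤ A i + t := by
    intro i hi
    obtain ⟨j, rfl | rfl⟩ := Nat.even_or_odd' i
    · obtain ⟨h1, h2, h3, h4⟩ := hm j (by omega)
      rw [hAe, hAo]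
      exact ⟨h1, Or.inr h3, by linarith⟩
    · obtain ⟨h1, h2, h3, h4⟩ := hm j (by omega)
      rw [show 2 * j + 1 + 1 = 2 * (j + 1) by ring, hAe, hAo]
      push_cast
      exact ⟨h2, Or.inl h4, by linarith⟩
  refine ⟨2 * C - 1, A, ?_, ?_, fun i hi => (key i hi).1, by omega, fun i hi => (key i hi).2.1,
    fun i hi => (key i hi).2.2⟩
  · simpa using hAe 0
  · rw [show 2 * C - 1 + 1 = 2 * C by omega, hAe, hCd]
    ring
end

section
/- Let f : [0,∞) → [0,∞) be a nondecreasing function that is affine on each interval [n, n+1] for every integer n ≥ 0, and let r ∈ ℕ with r ≥ 1. Then there is a finite partition 1 = a₀ ≤ a₁ ≤ ⋯ ≤ a_{k+1} = r of [1, r] into closed intervals [a_i, a_{i+1}] with disjoint interiors such that: each interval [a_i, a_{i+1}] is yellow or teal for f; a_{i+1} ≤ 2·a_i for every i ≤ k; and a_{i+2} > 2·a_i for every i < k. -/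
/-- The relation "`t` is a greedy step to the left from `b`", for `b > 2`: either `t < b` is the
first minimiser of `x ↦ f x - x` on `[b / 2, b]`, or `b` is a minimiser there and
`t = b / 2`. -/
def GreedyStep (f : ℝ → ℝ) (b t : ℝ) : Prop :=
  (b / 2 ≤ t ∧ t < b ∧ (∀ c ∈ Set.Icc (b / 2) b, f t - t ≤ f c - c) ∧
    ∀ c, b / 2 ≤ c → c < t → f t - t < f c - c) ∨
  (t = b / 2 ∧ ∀ c ∈ Set.Icc (b / 2) b, f b - b ≤ f c - c)

lemma continuousOn_of_affine (f : ℝ → ℝ)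
    (haff : ∀ n : ℕ, ∀ x ∈ Set.Icc (n : ℝ) (n + 1),
      f x = f n + (x - n) * (f (n + 1) - f n)) (n : ℕ) :
    ContinuousOn f (Set.Icc 0 (n : ℝ)) := by
  induction n with
  | zero => simp
  | succ n ih =>
    have h : ContinuousOn f (Set.Icc (n : ℝ) (n + 1)) := by
      refine ContinuousOn.congr (f := fun x => f n + (x - n) * (f (n + 1) - f n)) ?_ (haff n)
      fun_prop
    have := ih.union_of_isClosed h isClosed_Icc isClosed_Icc
    rwa [Set.Icc_union_Icc_eq_Icc (by positivity) (by linarith), ← Nat.cast_succ] at this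

lemma exists_first_min (g : ℝ → ℝ) (a b : ℝ) (hab : a ≤ b) (hg : ContinuousOn g (Set.Icc a b)) :
    ∃ t ∈ Set.Icc a b, (∀ c ∈ Set.Icc a b, g t ≤ g c) ∧ ∀ c, a ≤ c → c < t → g t < g c := by
  obtain ⟨m, hm, hmin⟩ := isCompact_Icc.exists_isMinOn (Set.nonempty_Icc.2 hab) hg
  have hcl : IsClosed (Set.Icc a b ∩ g ⁻¹' Set.Iic (g m)) :=
    hg.preimage_isClosed_of_isClosed isClosed_Icc isClosed_Iic
  have hcp : IsCompact (Set.Icc a b ∩ g ⁻¹' Set.Iic (g m)) :=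
    isCompact_Icc.of_isClosed_subset hcl Set.inter_subset_left
  obtain ⟨t, ⟨ht, htm⟩, hleast⟩ := hcp.exists_isLeast ⟨m, hm, le_refl (g m)⟩
  refine ⟨t, ht, fun c hc => le_trans htm (hmin hc), fun c hac hct => ?_⟩
  by_contra! hlt
  exact absurd (hleast ⟨⟨hac, hct.le.trans ht.2⟩, hlt.trans htm⟩) (not_le.2 hct)

lemma exists_step (f : ℝ → ℝ)
    (haff : ∀ n : ℕ, ∀ x ∈ Set.Icc (n : ℝ) (n + 1),
      f x = f n + (x - n) * (f (n + 1) - f n)) (b : ℝ) (hb : 1 ≤ b) :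
    ∃ t, 1 ≤ t ∧ t ≤ b ∧ b ≤ 2 * t ∧ (IsYellow f t b ∨ IsTeal f t b) ∧
      (b ≤ 2 → t = 1) ∧ (2 < b → GreedyStep f b t) := by
  rcases le_or_gt b 2 with h2 | h2
  · refine ⟨1, le_rfl, hb, by linarith, ?_, fun _ => rfl, fun h => absurd h2 (not_le.2 h)⟩
    have key : ∀ x ∈ Set.Icc (1 : ℝ) b, f x = f 1 + (x - 1) * (f (1 + 1) - f 1) := by
      intro x hx
      have := haff 1 x (by constructor <;> push_cast <;> linarith [hx.1, hx.2])
      simpa using this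
    rcases le_total 1 (f (1 + 1) - f 1) with hs | hs
    · left
      intro c hc
      rw [key c hc]
      nlinarith [hc.1]
    · right
      intro c hc
      rw [key c hc, key b ⟨hb, le_rfl⟩]
      nlinarith [hc.2]
  · have hg : ContinuousOn (fun x => f x - x) (Set.Icc (b / 2) b) := by
      obtain ⟨n, hn⟩ := exists_nat_ge b
      refine ContinuousOn.sub ?_ continuousOn_id
      exact (continuousOn_of_affine f haff n).mono (Set.Icc_subset_Icc (by linarith) hn)
    obtain ⟨t, ht, hmin, hfirst⟩ := exists_first_min _ (b / 2) b (by linarith) hg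
    rcases ht.2.lt_or_eq with htb | rfl
    · refine ⟨t, by linarith [ht.1], htb.le, by linarith [ht.1], Or.inl fun c hc => ?_,
        fun h => absurd h (not_le.2 h2), fun _ => Or.inl ⟨ht.1, htb, hmin, hfirst⟩⟩
      have := hmin c ⟨ht.1.trans hc.1, hc.2⟩
      linarith
    · refine ⟨t / 2, by linarith, by linarith, by linarith, Or.inr fun c hc => ?_,
        fun h => absurd h (not_le.2 h2), fun _ => Or.inr ⟨rfl, hmin⟩⟩
      have := hmin c hc
      linarith

lemma GreedyStep.lt {f : ℝ → ℝ} {b t : ℝ} (hb : 2 < b) (h : GreedyStep f b t) : t < b := by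
  rcases h with ⟨-, h, -⟩ | ⟨rfl, -⟩ <;> linarith

/-- Two greedy steps from `b` more than halve it. -/
lemma step_step_lt {f : ℝ → ℝ} {b t s : ℝ} (hb : 2 < b) (h : GreedyStep f b t)
    (hs1 : t ≤ 2 → s = 1) (hs2 : 2 < t → GreedyStep f t s) : 2 * s < b := by
  rcases le_or_gt t 2 with ht | ht
  · linarith [hs1 ht]
  have hst := (hs2 ht).lt ht
  rcases h with ⟨-, htb, -, hfirst⟩ | ⟨rfl, -⟩
  · rcases hs2 ht with ⟨-, -, hsmin, -⟩ | ⟨rfl, -⟩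
    · by_contra! hlt
      have h1 := hfirst s (by linarith) hst
      have h2 := hsmin t ⟨by linarith, le_rfl⟩
      linarith
    · linarith
  · linarith

/-- Existence of a good partition of `[1, r]`: a partition into closed intervals,
each yellow or teal for `f`, with `a_{i+1} ≤ 2 a_i` for every `i` and
`a_{i+2} > 2 a_i` for every `i < k`. -/
theorem exists_good_partition
    (f : ℝ → ℝ)
    (hf0 : ∀ x, 0 ≤ x → 0 ≤ f x)
    (hmono : MonotoneOn f (Set.Ici (0 : ℝ)))
    (haff : ∀ n : ℕ, ∀ x ∈ Set.Icc (n : ℝ) (n + 1),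
      f x = f n + (x - n) * (f (n + 1) - f n))
    (r : ℕ) (hr : 1 ≤ r) :
    ∃ (k : ℕ) (A : ℕ → ℝ),
      A 0 = 1 ∧ A (k + 1) = r ∧
      (∀ i ≤ k, A i ≤ A (i + 1)) ∧
      (∀ i ≤ k, IsYellow f (A i) (A (i + 1)) ∨ IsTeal f (A i) (A (i + 1))) ∧
      (∀ i ≤ k, A (i + 1) ≤ 2 * A i) ∧
      (∀ i < k, 2 * A i < A (i + 2)) := by
  choose! p hp1 hple hp2 hpc hpone hpg using exists_step f haff
  -- `B` lists the partition points from right to left.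
  let B : ℕ → ℝ := fun n => p^[n] r
  have hB0 : B 0 = r := rfl
  have hBs : ∀ n, B (n + 1) = p (B n) := fun n => Function.iterate_succ_apply' p n _
  have hB1 : ∀ n, 1 ≤ B n := by
    intro n
    induction n with
    | zero => rw [hB0]; exact_mod_cast hr
    | succ n ih => rw [hBs]; exact hp1 _ ih
  have hhalf : ∀ n, 2 < B n → 2 * B (n + 2) < B n := by
    intro n hn
    rw [hBs (n + 1), hBs n]
    exact step_step_lt hn (hpg _ (hB1 n) hn) (hpone _ (hp1 _ (hB1 n))) (hpg _ (hp1 _ (hB1 n)))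
  have hex : ∃ k, B (k + 1) = 1 := by
    by_contra! hne
    have hgt : ∀ n, 2 < B n := by
      intro n
      by_contra! hle
      exact hne n (by rw [hBs]; exact hpone _ (hB1 n) hle)
    have hpow : ∀ n, 2 ^ n * B (2 * n) ≤ r := by
      intro n
      induction n with
      | zero => simp [hB0]
      | succ n ih =>
        have h := hhalf (2 * n) (hgt _)
        have h2 : (0 : ℝ) < 2 ^ n := by positivity
        rw [show 2 * (n + 1) = 2 * n + 2 by ring, pow_succ]
        nlinarith
    have h1 := hpow r
    have h2 : (r : ℝ) < 2 ^ r := by exact_mod_cast Nat.lt_two_pow_self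
    nlinarith [hB1 (2 * r)]
  classical
  -- With `k` least, every step but the leftmost starts from a point `> 2`, where `hhalf` applies.
  obtain ⟨k, hk, hmin⟩ : ∃ k, B (k + 1) = 1 ∧ ∀ j < k, B (j + 1) ≠ 1 :=
    ⟨Nat.find hex, Nat.find_spec hex, fun j hj => Nat.find_min hex hj⟩
  have hidx : ∀ i ≤ k, B (k + 1 - i) = p (B (k + 1 - (i + 1))) := by
    intro i hi
    rw [← hBs]
    congr 1
    omega
  refine ⟨k, fun i => B (k + 1 - i), by simpa using hk, by simp [hB0], ?_, ?_, ?_, ?_⟩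
  · intro i hi
    simp only [hidx i hi]
    exact hple _ (hB1 _)
  · intro i hi
    simp only [hidx i hi]
    exact hpc _ (hB1 _)
  · intro i hi
    simp only [hidx i hi]
    exact hp2 _ (hB1 _)
  · intro i hi
    obtain ⟨j, rfl⟩ : ∃ j, k = i + 1 + j := ⟨k - (i + 1), by omega⟩
    have h1 : i + 1 + j + 1 - i = j + 2 := by omega
    have h2 : i + 1 + j + 1 - (i + 2) = j := by omega
    simp only [h1, h2]
    refine hhalf j ?_
    by_contra! hle
    exact hmin j (by omega) (by rw [hBs]; exact hpone _ (hB1 j) hle)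
end

section
/- Let f : [0,∞) → [0,∞) be a nondecreasing function that is affine on each interval [n, n+1] for every integer n ≥ 0, and let t > 0. Suppose a < b < c are nonnegative reals such that [a, b] is red for f and [b, c] is blue for f. Then b is contained in the interior of some green interval for f (with parameter t), i.e., there exist s₁ < b < s₂ such that [s₁, s₂] is green. -/
/-- `[a, b]` is red for `f`: `f` increases strictly faster than slope one on `[a, b]`. -/
def IsRed (f : ℝ → ℝ) (a b : ℝ) : Prop :=
  ∀ c d : ℝ, a ≤ c → c < d → d ≤ b → d - c < f d - f c

/-- `[a, b]` is blue for `f`: `f` is constant on `[a, b]`. -/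
def IsBlue (f : ℝ → ℝ) (a b : ℝ) : Prop :=
  ∀ c ∈ Set.Icc a b, f c = f a

/-- `[a, b]` is green for `f` (with parameter `t`): it is both yellow and teal,
has length at most `t`, and `f(b) - f(a) = b - a`. -/
def IsGreen (f : ℝ → ℝ) (t a b : ℝ) : Prop :=
  IsYellow f a b ∧ IsTeal f a b ∧ b - a ≤ t ∧ f b - f a = b - a

/-- If `[a, b]` is red and `[b, c]` is blue, then `b` lies in the interior of a
green interval. -/
theorem mem_interior_green_of_red_blue
    (f : ℝ → ℝ)
    (hf0 : ∀ x, 0 ≤ x → 0 ≤ f x)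
    (hmono : MonotoneOn f (Set.Ici (0 : ℝ)))
    (haff : ∀ n : ℕ, ∀ x ∈ Set.Icc (n : ℝ) (n + 1),
      f x = f n + (x - n) * (f (n + 1) - f n))
    (t : ℝ) (ht : 0 < t)
    (a b c : ℝ) (ha : 0 ≤ a) (hab : a < b) (hbc : b < c)
    (hred : IsRed f a b) (hblue : IsBlue f b c) :
    ∃ s₁ s₂ : ℝ, s₁ < b ∧ b < s₂ ∧ IsGreen f t s₁ s₂ := by
  -- `b` lies in `(n, n + 1]`, so `f` is affine just to the left of `b`.
  obtain ⟨n, hnb, hbn⟩ : ∃ n : ℕ, (n : ℝ) < b ∧ b ≤ n + 1 := by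
    have hpos : 0 < ⌈b⌉₊ := Nat.ceil_pos.2 (ha.trans_lt hab)
    obtain ⟨n, hn⟩ := Nat.exists_eq_succ_of_ne_zero hpos.ne'
    refine ⟨n, Nat.lt_ceil.1 (by omega), ?_⟩
    have h := Nat.le_ceil b
    rw [hn] at h
    simpa using h
  set K := f (n + 1) - f n with hK
  have hn0 : (0 : ℝ) ≤ n := n.cast_nonneg
  have hK0 : 0 ≤ K :=
    sub_nonneg.2 (hmono hn0 (Set.mem_Ici.2 (by linarith)) (by linarith))
  have hε : 0 < min t (c - b) := lt_min ht (by linarith)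
  set ε := min t (c - b)
  have hεt : ε ≤ t := min_le_left _ _
  have hεc : ε ≤ c - b := min_le_right _ _
  obtain ⟨δ, hδ, hδa, hδn, hδε⟩ :
      ∃ δ : ℝ, 0 < δ ∧ δ ≤ b - a ∧ δ ≤ b - n ∧ δ * K ≤ ε := by
    have hq : 0 < ε / (K + 1) := by positivity
    refine ⟨min (b - a) (min (b - n) (ε / (K + 1))),
      lt_min (by linarith) (lt_min (by linarith) hq), min_le_left _ _,
      (min_le_right _ _).trans (min_le_left _ _), ?_⟩
    calc _ ≤ ε / (K + 1) * K :=
          mul_le_mul_of_nonneg_right ((min_le_right _ _).trans (min_le_right _ _)) hK0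
      _ ≤ ε / (K + 1) * (K + 1) := by gcongr; linarith
      _ = ε := by field_simp
  have hrise : f b - f (b - δ) = δ * K := by
    rw [haff n b ⟨hnb.le, hbn⟩, haff n (b - δ) ⟨by linarith, by linarith⟩]
    ring
  have hred' := hred (b - δ) b (by linarith) (by linarith) le_rfl
  -- Redness on all of `[b - δ, b]`, in the non-strict form that includes the left end.
  have hsteep : ∀ x, b - δ ≤ x → x ≤ b → x - (b - δ) ≤ f x - f (b - δ) := by
    intro x hx hxb
    rcases hx.eq_or_lt with rfl | hx
    · simp
    · exact (hred _ x (by linarith) hx hxb).le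
  have hconst : ∀ x, b ≤ x → x ≤ b - δ + δ * K → f x = f b := fun x h₁ h₂ =>
    hblue x ⟨h₁, by linarith⟩
  have hend := hconst (b - δ + δ * K) (by linarith) le_rfl
  refine ⟨b - δ, b - δ + δ * K, by linarith, by linarith, ?_, ?_, by linarith, by linarith⟩
  · rintro x ⟨hx₁, hx₂⟩
    rcases le_total x b with hx | hx
    · exact hsteep x hx₁ hx
    · have := hconst x hx hx₂
      linarith
  · rintro x ⟨hx₁, hx₂⟩
    rcases le_total x b with hx | hx
    · have := hsteep x hx₁ hx
      linarith
    · have := hconst x hx hx₂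
      linarith
end
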